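/- arXiv:1606.04850 — 2 statements merged into one kernel-verified Lean document; each statement's English description precedes it below -/
import Mathlib

section
/- The series ∑_{n=1}^∞ ζ(2n)/(n(2n+3)·4^n) equals -3ζ(3)/(2π²) + (1/3)·log π - 1/9. -/
open Real

/-! The Euler product `sinc θ = ∏ (1 - (θ / π)² / k²)` gives
`-log (sinc θ) = ∑ ζ(2n) / n * (θ / π)^(2n)`. Integrating against `θ²` over `[0, π / 2]` produces
the denominators `(2n + 3) 4^n`, so the series is `8 / π³` times `∫ -log (sinc θ) θ²`. On this
interval `-log (sinc θ) = log (2θ) - log (2 sin θ)`. The first term integrates elementarily, to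
`(log π) / 3 - 1 / 9` after scaling. For the second, the expansion
`θ² = π² / 12 + ∑ (-1)^n cos (2nθ) / n²` converges absolutely and the cosine moments of
`log (2 sin θ)` are `-π / (4n)`, which leaves `-(π / 4) ∑ (-1)^n / n³ = (3 π / 16) ζ(3)`. -/

open Filter Set MeasureTheory Polynomial.Chebyshev
open scoped Interval Topology

/-- The sum `∑ 1 / k ^ m` over all naturals `k`. For `m ≥ 2` it is the value `ζ(m)` of the Riemann
zeta function, as a real number; the term `k = 0` vanishes since `1 / 0 = 0`. -/
noncomputable def realZeta (m : ℕ) : ℝ := ∑' k : ℕ, 1 / (k : ℝ) ^ m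

lemma realZeta_nonneg (m : ℕ) : 0 ≤ realZeta m := tsum_nonneg fun k ↦ by positivity

lemma hasSum_realZeta {m : ℕ} (hm : 1 < m) : HasSum (fun k : ℕ ↦ 1 / (k : ℝ) ^ m) (realZeta m) :=
  (summable_one_div_nat_pow.2 hm).hasSum

lemma hasSum_realZeta_succ {m : ℕ} (hm : 1 < m) :
    HasSum (fun k : ℕ ↦ 1 / ((k : ℝ) + 1) ^ m) (realZeta m) := by
  have h := (hasSum_nat_add_iff' 1).2 (hasSum_realZeta hm)
  simpa [show m ≠ 0 by lia] using h

lemma riemannZeta_natCast_eq_realZeta {m : ℕ} (hm : 1 < m) : riemannZeta m = realZeta m := by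
  rw [zeta_nat_eq_tsum_of_gt_one hm, realZeta]
  push_cast
  rfl

lemma hasSum_swap_of_nonneg {α β : Type*} {f : α → β → ℝ} {g : α → ℝ} {h : β → ℝ} {s : ℝ}
    (hf : ∀ a b, 0 ≤ f a b) (hrow : ∀ a, HasSum (f a) (g a)) (hg : HasSum g s)
    (hcol : ∀ b, HasSum (fun a ↦ f a b) (h b)) : HasSum h s := by
  have hsum : Summable (Function.uncurry f) := by
    refine (summable_prod_of_nonneg fun p ↦ hf p.1 p.2).2 ⟨fun a ↦ (hrow a).summable, ?_⟩
    simpa only [Function.uncurry_apply_pair, (hrow _).tsum_eq] using hg.summable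
  have hs : HasSum (Function.uncurry f) s :=
    (hsum.hasSum.prod_fiberwise hrow).unique hg ▸ hsum.hasSum
  exact ((Equiv.prodComm β α).hasSum_iff.2 hs).prod_fiberwise hcol

lemma hasSum_neg_one_pow_mul {R : Type*} [NormedRing R] [CompleteSpace R] {f : ℕ → R} {a b : R}
    (hf : HasSum f a) (heven : HasSum (fun n ↦ f (2 * n)) b) :
    HasSum (fun n ↦ (-1) ^ n * f n) (2 * b - a) := by
  have hodd : Summable fun n ↦ f (2 * n + 1) :=
    hf.summable.comp_injective fun m n h ↦ by simpa using h
  obtain ⟨c, hodd⟩ := hodd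
  have ha : b + c = a := (heven.even_add_odd hodd).unique hf
  rw [show 2 * b - a = b + -c by rw [← ha, two_mul]; abel]
  refine HasSum.even_add_odd ?_ ?_
  · simpa using heven
  · simpa [pow_succ] using hodd.neg

lemma hasSum_neg_one_pow_div_nat_pow {m : ℕ} (hm : 1 < m) :
    HasSum (fun n : ℕ ↦ (-1 : ℝ) ^ n * (1 / (n : ℝ) ^ m)) ((2 / 2 ^ m - 1) * realZeta m) := by
  have heven : HasSum (fun n : ℕ ↦ 1 / ((2 * n : ℕ) : ℝ) ^ m) (1 / 2 ^ m * realZeta m) := by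
    refine ((hasSum_realZeta hm).mul_left (1 / 2 ^ m)).congr_fun fun n ↦ ?_
    push_cast
    rw [mul_pow, one_div_mul_one_div]
  rw [show (2 / 2 ^ m - 1) * realZeta m = 2 * (1 / 2 ^ m * realZeta m) - realZeta m by ring]
  exact hasSum_neg_one_pow_mul (hasSum_realZeta hm) heven

lemma sinc_pos {θ : ℝ} (hθ : |θ| < π) : 0 < sinc θ := by
  have hpos {t : ℝ} (h0 : 0 < t) (h1 : t < π) : 0 < sinc t := by
    rw [sinc_of_ne_zero h0.ne']
    exact div_pos (sin_pos_of_pos_of_lt_pi h0 h1) h0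
  rw [abs_lt] at hθ
  rcases lt_trichotomy θ 0 with h | rfl | h
  · rw [← sinc_neg]
    exact hpos (by linarith) (by linarith)
  · simp
  · exact hpos h hθ.2

lemma tendsto_prod_sinc (θ : ℝ) :
    Tendsto (fun n : ℕ ↦ ∏ k ∈ Finset.range n, (1 - (θ / π) ^ 2 / ((k : ℝ) + 1) ^ 2)) atTop
      (𝓝 (sinc θ)) := by
  rcases eq_or_ne θ 0 with rfl | hθ
  · simp
  · have h := (tendsto_euler_sin_prod (θ / π)).div_const θ
    simpa only [mul_div_cancel₀ θ pi_ne_zero, mul_div_cancel_left₀ _ hθ, sinc_of_ne_zero hθ] using h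

lemma hasSum_neg_log_sinc {θ : ℝ} (hθ : |θ| < π) :
    HasSum (fun n : ℕ ↦ realZeta (2 * (n + 1)) / (n + 1) * (θ / π) ^ (2 * (n + 1)))
      (-log (sinc θ)) := by
  set q : ℕ → ℝ := fun k ↦ (θ / π) ^ 2 / ((k : ℝ) + 1) ^ 2
  have hq0 (k : ℕ) : 0 ≤ q k := by positivity
  have hq1 (k : ℕ) : q k < 1 := by
    have hx : (θ / π) ^ 2 < 1 := by
      rw [sq_lt_one_iff_abs_lt_one, abs_div, abs_of_pos pi_pos, div_lt_one pi_pos]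
      exact hθ
    refine (div_le_self (sq_nonneg _) ?_).trans_lt hx
    exact one_le_pow₀ (by simp)
  have hrow (k : ℕ) : HasSum (fun n : ℕ ↦ q k ^ (n + 1) / ((n : ℝ) + 1)) (-log (1 - q k)) :=
    hasSum_pow_div_log_of_abs_lt_one (abs_lt.2 ⟨by linarith [hq0 k], hq1 k⟩)
  have hprod : HasSum (fun k ↦ -log (1 - q k)) (-log (sinc θ)) := by
    rw [hasSum_iff_tendsto_nat_of_nonneg fun k ↦ (hrow k).nonneg fun n ↦ by positivity]
    refine ((tendsto_prod_sinc θ).log (sinc_pos hθ).ne').neg.congr fun n ↦ ?_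
    rw [log_prod fun k _ ↦ (sub_pos.2 (hq1 k)).ne', Finset.sum_neg_distrib]
  refine hasSum_swap_of_nonneg (fun k n ↦ by positivity) hrow hprod fun n ↦ ?_
  rw [div_mul_eq_mul_div, mul_div_assoc]
  refine ((hasSum_realZeta_succ (by lia)).mul_right _).congr_fun fun k ↦ ?_
  rw [div_pow, ← pow_mul, ← pow_mul]
  ring

lemma hasSum_intervalIntegral_mul {ι : Type*} [Countable ι] {a b : ℝ} {F : ι → ℝ → ℝ}
    {f g : ℝ → ℝ} {M : ι → ℝ} (hF : ∀ i, Continuous (F i)) (hM : Summable M)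
    (hFM : ∀ i, ∀ x ∈ Ι a b, |F i x| ≤ M i) (hFf : ∀ x ∈ Ι a b, HasSum (fun i ↦ F i x) (f x))
    (hg : IntervalIntegrable g volume a b) :
    HasSum (fun i ↦ ∫ x in a..b, F i x * g x) (∫ x in a..b, f x * g x) := by
  refine intervalIntegral.hasSum_integral_of_dominated_convergence (fun i x ↦ M i * |g x|)
    (fun i ↦ (hF i).aestronglyMeasurable.mul hg.aestronglyMeasurable_restrict_uIoc)
    (fun i ↦ .of_forall fun x hx ↦ ?_) (.of_forall fun x _ ↦ hM.mul_right _) ?_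
    (.of_forall fun x hx ↦ (hFf x hx).mul_right _)
  · rw [norm_mul]
    exact mul_le_mul_of_nonneg_right (hFM i x hx) (norm_nonneg _)
  · simpa only [tsum_mul_right] using hg.abs.const_mul (∑' i, M i)

lemma hasSum_integral_pow_mul_neg_log_sinc (p : ℕ) {a : ℝ} (ha0 : 0 ≤ a) (ha : a < π) :
    HasSum (fun n : ℕ ↦ realZeta (2 * (n + 1)) / ((n + 1) * (2 * n + p + 3)) *
        (a / π) ^ (2 * (n + 1)) * a ^ (p + 1))
      (∫ θ in 0..a, -log (sinc θ) * θ ^ p) := by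
  have hmem {θ : ℝ} (hθ : θ ∈ Ι 0 a) : 0 < θ ∧ θ ≤ a := by rwa [uIoc_of_le ha0] at hθ
  have h := hasSum_intervalIntegral_mul (a := 0) (b := a) (g := fun θ ↦ θ ^ p)
    (F := fun (n : ℕ) θ ↦ realZeta (2 * (n + 1)) / (n + 1) * (θ / π) ^ (2 * (n + 1)))
    (fun n ↦ by fun_prop)
    (hasSum_neg_log_sinc (by rwa [abs_of_nonneg ha0])).summable
    (fun n θ hθ ↦ by
      have := realZeta_nonneg (2 * (n + 1))
      obtain ⟨hθ0, hθa⟩ := hmem hθ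
      rw [abs_of_nonneg (by positivity)]
      gcongr)
    (fun θ hθ ↦ hasSum_neg_log_sinc <| by
      rw [abs_of_pos (hmem hθ).1]
      exact (hmem hθ).2.trans_lt ha)
    (by simp)
  refine h.congr_fun fun n ↦ ?_
  have hint : ∫ θ in 0..a, (θ / π) ^ (2 * (n + 1)) * θ ^ p =
      (a / π) ^ (2 * (n + 1)) * a ^ (p + 1) / (2 * n + p + 3) := by
    simp_rw [div_pow, div_mul_eq_mul_div, ← pow_add]
    rw [intervalIntegral.integral_div, integral_pow]
    push_cast
    rw [zero_pow (by lia), show (2 * ((n : ℝ) + 1) + p + 1) = 2 * n + p + 3 by ring]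
    ring
  simp_rw [mul_assoc]
  rw [intervalIntegral.integral_const_mul, hint]
  field_simp

lemma integral_pow_mul_log (n : ℕ) {b : ℝ} (hb : 0 ≤ b) :
    ∫ x in 0..b, x ^ n * log x = b ^ (n + 1) / (n + 1) * (log b - 1 / (n + 1)) := by
  have hcont : Continuous fun x ↦ x ^ (n + 1) * log x := by
    simp_rw [pow_succ, mul_assoc]
    exact (continuous_pow n).mul continuous_mul_log
  have hderiv : ∀ x ∈ Ioo 0 b, HasDerivAt
      (fun x ↦ x ^ (n + 1) * log x / (n + 1) - x ^ (n + 1) / (n + 1) ^ 2) (x ^ n * log x) x := by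
    intro x hx
    have hx0 : x ≠ 0 := hx.1.ne'
    refine ((((hasDerivAt_pow (n + 1) x).mul (hasDerivAt_log hx0)).div_const _).sub
      ((hasDerivAt_pow (n + 1) x).div_const _)).congr_deriv ?_
    rw [Nat.add_sub_cancel]
    push_cast
    field_simp
    ring
  rw [intervalIntegral.integral_eq_sub_of_hasDerivAt_of_le hb
    (by fun_prop) hderiv (intervalIntegral.intervalIntegrable_log'.continuousOn_mul (by fun_prop)),
    log_zero, zero_pow n.succ_ne_zero]
  field_simp
  ring

lemma integral_cos_two_mul_nat_mul {n : ℕ} (hn : n ≠ 0) :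
    ∫ θ in 0..π / 2, cos (2 * n * θ) = 0 := by
  have h : (2 * n : ℝ) ≠ 0 := by positivity
  rw [intervalIntegral.integral_comp_mul_left _ h, integral_cos,
    show 2 * n * (π / 2) = n * π by ring, sin_nat_mul_pi]
  simp

lemma integral_eval_U_two_mul_cos (n : ℕ) :
    ∫ θ in 0..π / 2, (U ℝ (2 * n)).eval (cos θ) = π / 2 := by
  induction n with
  | zero => simp
  | succ n ih =>
    have hstep (θ : ℝ) : (U ℝ (2 * (n + 1 : ℕ))).eval (cos θ) =
        2 * cos (2 * (n + 1 : ℕ) * θ) + (U ℝ (2 * n)).eval (cos θ) := by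
      rw [show (2 * (n + 1 : ℕ) : ℤ) = 2 * n + 2 by push_cast; ring, U_eq_two_mul_T_add_U,
        Polynomial.eval_add, Polynomial.eval_mul, T_real_cos]
      push_cast
      simp [mul_add]
    simp_rw [hstep]
    rw [intervalIntegral.integral_add, ih, intervalIntegral.integral_const_mul,
      integral_cos_two_mul_nat_mul n.succ_ne_zero, mul_zero, zero_add]
    · exact Continuous.intervalIntegrable (by fun_prop) _ _
    · exact Continuous.intervalIntegrable (by fun_prop) _ _

lemma integral_eval_U_mul_cos (n : ℕ) :
    ∫ θ in 0..π / 2, (U ℝ (2 * n + 1)).eval (cos θ) * cos θ = π / 2 := by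
  have hstep (θ : ℝ) : (U ℝ (2 * n + 1)).eval (cos θ) * cos θ =
      (U ℝ (2 * (n + 1 : ℕ))).eval (cos θ) - cos (2 * (n + 1 : ℕ) * θ) := by
    have h := congrArg (Polynomial.eval (cos θ)) (U_eq_X_mul_U_add_T ℝ (2 * n + 1))
    rw [show (2 * n + 1 + 1 : ℤ) = 2 * (n + 1 : ℕ) by push_cast; ring] at h
    simp only [Nat.cast_add, Nat.cast_one, Polynomial.eval_add, Polynomial.eval_mul,
      Polynomial.eval_X, T_real_cos, Int.cast_mul, Int.cast_ofNat, Int.cast_add, Int.cast_natCast,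
      Int.cast_one] at h ⊢
    linarith
  simp_rw [hstep]
  rw [intervalIntegral.integral_sub, integral_eval_U_two_mul_cos,
    integral_cos_two_mul_nat_mul n.succ_ne_zero, sub_zero]
  · exact Continuous.intervalIntegrable (by fun_prop) _ _
  · exact Continuous.intervalIntegrable (by fun_prop) _ _

lemma intervalIntegrable_log_two_mul_sin (a b : ℝ) :
    IntervalIntegrable (fun θ ↦ log (2 * sin θ)) volume a b :=
  (analyticOnNhd_const.mul analyticOnNhd_sin).meromorphicOn.intervalIntegrable_log

lemma log_two_mul_sin {θ : ℝ} (hθ : θ ∈ Ioo 0 π) : log (2 * sin θ) = log 2 + log (sin θ) :=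
  log_mul two_ne_zero (sin_pos_of_mem_Ioo hθ).ne'

lemma integral_log_two_mul_sin : ∫ θ in 0..π / 2, log (2 * sin θ) = 0 := by
  calc ∫ θ in 0..π / 2, log (2 * sin θ)
      = ∫ θ in 0..π / 2, (log 2 + log (sin θ)) :=
        intervalIntegral.integral_congr_Ioo_of_le (by positivity) fun θ hθ ↦
          log_two_mul_sin ⟨hθ.1, hθ.2.trans (half_lt_self pi_pos)⟩
    _ = π / 2 * log 2 + -log 2 * π / 2 := by
        rw [intervalIntegral.integral_add (by simp) (by apply intervalIntegrable_log_sin),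
          integral_log_sin_zero_pi_div_two]
        simp
    _ = 0 := by ring

lemma continuous_sin_mul_log_two_mul_sin (n : ℤ) :
    Continuous fun θ ↦ sin ((n + 1) * θ) * log (2 * sin θ) := by
  have h (θ : ℝ) : sin ((n + 1) * θ) * log (2 * sin θ) =
      (U ℝ n).eval (cos θ) / 2 * (2 * sin θ * log (2 * sin θ)) := by
    rw [← U_real_cos]
    ring
  have hlog : Continuous fun θ ↦ 2 * sin θ * log (2 * sin θ) :=
    continuous_mul_log.comp (continuous_const.mul continuous_sin)
  simp_rw [h]
  exact Continuous.mul (by fun_prop) hlog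

lemma hasDerivAt_sin_mul_log_two_mul_sin (n : ℤ) {θ : ℝ} (hθ : sin θ ≠ 0) :
    HasDerivAt (fun θ ↦ sin ((n + 1) * θ) * log (2 * sin θ))
      ((n + 1) * (cos ((n + 1) * θ) * log (2 * sin θ)) + (U ℝ n).eval (cos θ) * cos θ) θ := by
  refine (((hasDerivAt_id θ).const_mul (n + 1 : ℝ)).sin.mul
    (((hasDerivAt_sin θ).const_mul 2).log (mul_ne_zero two_ne_zero hθ))).congr_deriv ?_
  simp only [id_eq, ← U_real_cos]
  field_simp

lemma add_one_mul_integral_cos_mul_log_two_mul_sin (n : ℤ) :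
    (n + 1) * ∫ θ in 0..π / 2, cos ((n + 1) * θ) * log (2 * sin θ) =
      sin ((n + 1) * (π / 2)) * log 2 - ∫ θ in 0..π / 2, (U ℝ n).eval (cos θ) * cos θ := by
  have hcos : IntervalIntegrable
      (fun θ ↦ (n + 1) * (cos ((n + 1) * θ) * log (2 * sin θ))) volume 0 (π / 2) :=
    ((intervalIntegrable_log_two_mul_sin 0 (π / 2)).continuousOn_mul (by fun_prop)).const_mul _
  have hU : IntervalIntegrable (fun θ ↦ (U ℝ n).eval (cos θ) * cos θ) volume 0 (π / 2) :=
    Continuous.intervalIntegrable (by fun_prop) _ _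
  have hFTC := intervalIntegral.integral_eq_sub_of_hasDerivAt_of_le (by positivity)
    (continuous_sin_mul_log_two_mul_sin n).continuousOn
    (fun θ hθ ↦ hasDerivAt_sin_mul_log_two_mul_sin n
      (sin_pos_of_mem_Ioo ⟨hθ.1, hθ.2.trans (half_lt_self pi_pos)⟩).ne')
    (hcos.add hU)
  rw [intervalIntegral.integral_add hcos hU, intervalIntegral.integral_const_mul, sin_pi_div_two,
    mul_one, mul_zero, sin_zero, zero_mul, sub_zero] at hFTC
  exact eq_sub_of_add_eq hFTC

-- At `n = 0` both sides vanish, the right-hand side because `x / 0 = 0`.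
lemma integral_cos_mul_log_two_mul_sin (n : ℕ) :
    ∫ θ in 0..π / 2, cos (2 * n * θ) * log (2 * sin θ) = -π / (4 * n) := by
  rcases n with _ | n
  · simp [integral_log_two_mul_sin]
  have hcast : ((2 * n + 1 : ℤ) : ℝ) + 1 = 2 * (n + 1 : ℕ) := by
    push_cast
    ring
  have h := add_one_mul_integral_cos_mul_log_two_mul_sin (2 * n + 1)
  rw [hcast, integral_eval_U_mul_cos,
    show 2 * (n + 1 : ℕ) * (π / 2) = (n + 1 : ℕ) * π by ring, sin_nat_mul_pi, zero_mul] at h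
  rw [eq_div_iff (by positivity)]
  linarith

lemma eval_map_bernoulli_two (x : ℝ) :
    ((Polynomial.bernoulli 2).map (algebraMap ℚ ℝ)).eval x = x ^ 2 - x + 1 / 6 := by
  simp only [Polynomial.bernoulli_def, Finset.sum_range_succ, Finset.sum_range_zero,
    Polynomial.map_add, Polynomial.map_monomial, Polynomial.eval_add, Polynomial.eval_monomial,
    Polynomial.map_zero, Polynomial.eval_zero, eq_ratCast,
    bernoulli_zero, bernoulli_one, bernoulli_two, Nat.choose, Nat.reduceAdd, Nat.reduceSub]
  push_cast
  ring

lemma hasSum_cos_two_mul_nat_mul {θ : ℝ} (hθ : |θ| ≤ π / 2) :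
    HasSum (fun n : ℕ ↦ (-1) ^ n / (n : ℝ) ^ 2 * cos (2 * n * θ)) (θ ^ 2 - π ^ 2 / 12) := by
  have hx : θ / π + 1 / 2 ∈ Icc (0 : ℝ) 1 := by
    have : |θ / π| ≤ 1 / 2 := by
      rw [abs_div, abs_of_pos pi_pos, div_le_iff₀ pi_pos]
      linarith
    rw [abs_le] at this
    constructor <;> linarith
  have h := hasSum_one_div_nat_pow_mul_cos one_ne_zero hx
  have hval : (-1) ^ (1 + 1) * (2 * π) ^ (2 * 1) / 2 / Nat.factorial (2 * 1) *
      ((θ / π + 1 / 2) ^ 2 - (θ / π + 1 / 2) + 1 / 6) = θ ^ 2 - π ^ 2 / 12 := by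
    simp only [mul_one, Nat.factorial_two]
    push_cast
    field_simp
    ring
  rw [mul_one, eval_map_bernoulli_two] at h
  rw [← hval]
  refine h.congr_fun fun n ↦ ?_
  rw [show 2 * π * n * (θ / π + 1 / 2) = 2 * n * θ + n * π by field_simp, cos_add_nat_mul_pi]
  ring

lemma integral_sq_mul_log_two_mul_sin :
    ∫ θ in 0..π / 2, θ ^ 2 * log (2 * sin θ) = 3 * π / 16 * realZeta 3 := by
  have hg := intervalIntegrable_log_two_mul_sin 0 (π / 2)
  have hsum := hasSum_intervalIntegral_mul
    (F := fun (n : ℕ) θ ↦ (-1) ^ n / (n : ℝ) ^ 2 * cos (2 * n * θ))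
    (fun n ↦ by fun_prop) (hasSum_realZeta one_lt_two).summable
    (fun n θ _ ↦ by
      rw [abs_mul, abs_div, abs_neg_one_pow, abs_of_nonneg (by positivity)]
      exact mul_le_of_le_one_right (by positivity) (abs_cos_le_one _))
    (fun θ hθ ↦ hasSum_cos_two_mul_nat_mul <| by
      rw [uIoc_of_le (by positivity)] at hθ
      rw [abs_of_pos hθ.1]
      exact hθ.2)
    hg
  have hterm (n : ℕ) :
      ∫ θ in 0..π / 2, (-1) ^ n / (n : ℝ) ^ 2 * cos (2 * n * θ) * log (2 * sin θ) =
        -π / 4 * ((-1) ^ n * (1 / (n : ℝ) ^ 3)) := by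
    simp_rw [mul_assoc ((-1) ^ n / (n : ℝ) ^ 2)]
    rw [intervalIntegral.integral_const_mul, integral_cos_mul_log_two_mul_sin]
    field_simp
  have hval := (hasSum_neg_one_pow_div_nat_pow (m := 3) (by norm_num)).mul_left (-π / 4)
  simp_rw [hterm] at hsum
  have h := hsum.unique hval
  simp_rw [sub_mul] at h
  rw [intervalIntegral.integral_sub (hg.continuousOn_mul (by fun_prop)) (hg.const_mul _),
    intervalIntegral.integral_const_mul, integral_log_two_mul_sin, mul_zero, sub_zero] at h
  rw [h]
  ring

lemma neg_log_sinc {θ : ℝ} (hθ : θ ∈ Ioo 0 π) :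
    -log (sinc θ) = log θ + log 2 - log (2 * sin θ) := by
  rw [sinc_of_ne_zero hθ.1.ne', log_div (sin_pos_of_mem_Ioo hθ).ne' hθ.1.ne', log_two_mul_sin hθ]
  ring

lemma integral_neg_log_sinc_mul_sq :
    ∫ θ in 0..π / 2, -log (sinc θ) * θ ^ 2 =
      π ^ 3 / 8 * (-3 * realZeta 3 / (2 * π ^ 2) + 1 / 3 * log π - 1 / 9) := by
  have hlog : IntervalIntegrable (fun θ ↦ θ ^ 2 * log θ) volume 0 (π / 2) :=
    intervalIntegral.intervalIntegrable_log'.continuousOn_mul (by fun_prop)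
  have hsq : IntervalIntegrable (fun θ ↦ log 2 * θ ^ 2) volume 0 (π / 2) := by simp
  have hsin : IntervalIntegrable (fun θ ↦ θ ^ 2 * log (2 * sin θ)) volume 0 (π / 2) :=
    (intervalIntegrable_log_two_mul_sin 0 (π / 2)).continuousOn_mul (by fun_prop)
  calc ∫ θ in 0..π / 2, -log (sinc θ) * θ ^ 2
      = ∫ θ in 0..π / 2, (θ ^ 2 * log θ + log 2 * θ ^ 2 - θ ^ 2 * log (2 * sin θ)) := by
        refine intervalIntegral.integral_congr_Ioo_of_le (by positivity) fun θ hθ ↦ ?_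
        simp only [neg_log_sinc ⟨hθ.1, hθ.2.trans (half_lt_self pi_pos)⟩]
        ring
    _ = (∫ θ in 0..π / 2, θ ^ 2 * log θ) + log 2 * (∫ θ in 0..π / 2, θ ^ 2) -
          ∫ θ in 0..π / 2, θ ^ 2 * log (2 * sin θ) := by
        rw [intervalIntegral.integral_sub (hlog.add hsq) hsin,
          intervalIntegral.integral_add hlog hsq, intervalIntegral.integral_const_mul]
    _ = _ := by
        rw [integral_pow_mul_log 2 (by positivity), integral_pow, integral_sq_mul_log_two_mul_sin,
          log_div pi_ne_zero two_ne_zero]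
        field_simp
        ring

lemma hasSum_realZeta_even_div :
    HasSum (fun n : ℕ ↦ realZeta (2 * (n + 1)) / ((n + 1) * (2 * n + 5) * 4 ^ (n + 1)))
      (-3 * realZeta 3 / (2 * π ^ 2) + 1 / 3 * log π - 1 / 9) := by
  have h := hasSum_integral_pow_mul_neg_log_sinc 2 (a := π / 2) (by positivity)
    (half_lt_self pi_pos)
  rw [integral_neg_log_sinc_mul_sq] at h
  have h8 : π ^ 3 / 8 ≠ 0 := by positivity
  rw [← hasSum_mul_left_iff h8]
  refine h.congr_fun fun n ↦ ?_
  have hhalf : (π / 2 / π) ^ (2 * (n + 1)) = 1 / 4 ^ (n + 1) := by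
    rw [show π / 2 / π = 1 / 2 by field_simp, pow_mul, div_pow, one_pow, one_div_pow]
    norm_num
  rw [hhalf]
  push_cast
  field_simp
  ring

theorem stmt9 :
    ∑' n : ℕ, riemannZeta (2 * (n + 1)) / ((n + 1) * (2 * n + 5) * 4 ^ (n + 1)) =
      -3 * riemannZeta 3 / (2 * (π : ℂ) ^ 2) + (1 / 3) * (Real.log π : ℂ) - 1 / 9 := by
  have hζ3 : riemannZeta 3 = realZeta 3 :=
    mod_cast riemannZeta_natCast_eq_realZeta (m := 3) (by norm_num)
  have hζeven (n : ℕ) : riemannZeta (2 * (n + 1)) = realZeta (2 * (n + 1)) :=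
    mod_cast riemannZeta_natCast_eq_realZeta (m := 2 * (n + 1)) (by lia)
  simp_rw [hζ3, hζeven]
  have h := (Complex.hasSum_ofReal.2 hasSum_realZeta_even_div).tsum_eq
  push_cast at h
  exact h
end

section
/- The series ∑_{n=0}^∞ ζ(2n)/((2n+1)(n+1)·4^n) equals -7ζ(3)/(2π²). -/
open Real

/-!
Expanding `ζ(2n)` and summing geometric series gives `∑ ζ(2n) t^(2n) = -(π t cot (π t)) / 2` for
`0 < |t| < 1`. Since `∫₀^{1/2} (1/2 - t) t^(2n) dt = 1 / (8 (2n+1) (n+1) 4^n)`, the series equals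
`-4π ∫₀^{1/2} t (1/2 - t) cot (π t) dt`. On `[0, 1/2]` the factor `t (1/2 - t)` is
`(2/π³) ∑ sin (2π m t) / m³` over odd `m`. As `sin (2π m t) cot (π t)` is a modified Dirichlet
kernel, its integral over `[0, 1/2]` is `1/2` for every `m ≥ 1`, and it is at most `2m` in absolute
value, so the integral may be taken term by term and equals `(1/π³) ∑ 1/m³ = 7 ζ(3) / (8π³)`.
-/

lemma hasSum_one_div_nat_pow_riemannZeta {s : ℕ} (hs : 1 < s) :
    HasSum (fun n : ℕ ↦ 1 / (n : ℂ) ^ s) (riemannZeta s) := by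
  rw [zeta_nat_eq_tsum_of_gt_one hs]
  exact (Complex.summable_one_div_nat_cpow (p := s).2 (by simpa using hs)).congr
    (fun n ↦ by simp) |>.hasSum

lemma hasSum_odd_of_hasSum_even {G : Type*} [AddCommGroup G] [UniformSpace G] [IsUniformAddGroup G]
    [CompleteSpace G] [T2Space G] {f : ℕ → G} {a b : G} (hf : HasSum f a)
    (heven : HasSum (fun k ↦ f (2 * k)) b) : HasSum (fun k ↦ f (2 * k + 1)) (a - b) := by
  have hodd : Summable fun k ↦ f (2 * k + 1) :=
    hf.summable.comp_injective fun _ _ h ↦ by simpa using h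
  rw [hf.unique (heven.even_add_odd hodd.hasSum), add_sub_cancel_left]
  exact hodd.hasSum

lemma hasSum_one_div_odd_pow_riemannZeta {s : ℕ} (hs : 1 < s) :
    HasSum (fun k : ℕ ↦ 1 / ((2 * k + 1 : ℕ) : ℂ) ^ s) ((1 - 1 / 2 ^ s) * riemannZeta s) := by
  have hall := hasSum_one_div_nat_pow_riemannZeta hs
  have heven : HasSum (fun k : ℕ ↦ 1 / ((2 * k : ℕ) : ℂ) ^ s) (1 / 2 ^ s * riemannZeta s) := by
    convert! hall.mul_left (1 / 2 ^ s : ℂ) using 2 with k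
    rw [Nat.cast_mul, Nat.cast_ofNat, mul_pow, one_div_mul_one_div]
  rw [sub_mul, one_mul]
  exact hasSum_odd_of_hasSum_even hall heven

lemma hasSum_sq_div_sq_sub_sq_cot {z : ℂ} (hz : z ∈ Complex.integerComplement) :
    HasSum (fun k : ℕ ↦ z ^ 2 / (((k : ℂ) + 1) ^ 2 - z ^ 2))
      ((1 - π * z * Complex.cot (π * z)) / 2) := by
  have hz0 : z ≠ 0 := Complex.integerComplement.ne_zero hz
  have hcot : HasSum (cotTerm z) (π * Complex.cot (π * z) - 1 / z) := by
    rw [cot_series_rep' hz]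
    exact (summable_cotTerm hz).hasSum
  convert! hcot.mul_left (-z / 2) using 1
  · ext k
    have hadd : z + (k + 1) ≠ 0 := by
      exact_mod_cast Complex.integerComplement_add_ne_zero hz (k + 1)
    have hsub : z - (k + 1) ≠ 0 := by
      simpa [sub_eq_add_neg] using Complex.integerComplement_add_ne_zero hz (-((k : ℤ) + 1))
    have hsq : ((k : ℂ) + 1) ^ 2 - z ^ 2 = -((z + (k + 1)) * (z - (k + 1))) := by ring
    rw [cotTerm_identity hz, hsq]
    field_simp
  · field_simp
    ring

lemma hasSum_div_pow_two_mul_add_one {K : Type*} [NormedField K] {z w : K} (h : ‖z‖ < ‖w‖) :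
    HasSum (fun n : ℕ ↦ (z / w) ^ (2 * (n + 1))) (z ^ 2 / (w ^ 2 - z ^ 2)) := by
  have hw : w ^ 2 ≠ 0 := pow_ne_zero 2 (norm_pos_iff.1 ((norm_nonneg z).trans_lt h))
  have hlt : ‖(z / w) ^ 2‖ < 1 := by
    rw [norm_pow, norm_div]
    exact pow_lt_one₀ (by positivity) ((div_lt_one ((norm_nonneg z).trans_lt h)).2 h) two_ne_zero
  convert! (hasSum_geometric_of_norm_lt_one hlt).mul_left ((z / w) ^ 2) using 1
  · ext n
    ring
  · rw [div_pow, one_sub_div hw, inv_div, div_mul_div_cancel₀ hw]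

lemma summable_prod_div_nat_add_one_pow {z : ℂ} (hz : ‖z‖ < 1) :
    Summable fun p : ℕ × ℕ ↦ (z / ((p.2 : ℂ) + 1)) ^ (2 * (p.1 + 1)) := by
  have hgeom : Summable fun n : ℕ ↦ (‖z‖ ^ 2) ^ (n + 1) :=
    (summable_nat_add_iff 1).2 <|
      summable_geometric_of_lt_one (by positivity) (pow_lt_one₀ (norm_nonneg z) hz two_ne_zero)
  have hsq : Summable fun k : ℕ ↦ 1 / ((k : ℝ) + 1) ^ 2 := by
    exact_mod_cast (summable_nat_add_iff 1).2 (summable_one_div_nat_pow.2 one_lt_two)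
  refine .of_norm_bounded
    (hgeom.mul_of_nonneg hsq (fun _ ↦ by positivity) fun _ ↦ by positivity) ?_
  rintro ⟨n, k⟩
  have hk : ‖(k : ℂ) + 1‖ = k + 1 := mod_cast Complex.norm_natCast (k + 1)
  calc ‖(z / ((k : ℂ) + 1)) ^ (2 * (n + 1))‖
      = (‖z‖ ^ 2) ^ (n + 1) * (1 / ((k : ℝ) + 1) ^ (2 * (n + 1))) := by
        rw [norm_pow, norm_div, hk, div_pow, pow_mul, mul_one_div]
    _ ≤ (‖z‖ ^ 2) ^ (n + 1) * (1 / ((k : ℝ) + 1) ^ 2) := by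
        gcongr
        · simp
        · omega

lemma mem_integerComplement_of_norm_lt_one {z : ℂ} (hz0 : z ≠ 0) (hz : ‖z‖ < 1) :
    z ∈ Complex.integerComplement := by
  rintro ⟨m, rfl⟩
  rw [Complex.norm_intCast] at hz
  exact hz0 (by exact_mod_cast Int.abs_lt_one_iff.1 (by exact_mod_cast hz))

lemma hasSum_riemannZeta_two_mul_mul_pow {z : ℂ} (hz0 : z ≠ 0) (hz : ‖z‖ < 1) :
    HasSum (fun n : ℕ ↦ riemannZeta (2 * n) * z ^ (2 * n))
      (-(π * z * Complex.cot (π * z)) / 2) := by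
  have hsum := (summable_prod_div_nat_add_one_pow hz).hasSum
  have hrows (n : ℕ) : HasSum (fun k : ℕ ↦ (z / ((k : ℂ) + 1)) ^ (2 * (n + 1)))
      (riemannZeta (2 * (n + 1)) * z ^ (2 * (n + 1))) := by
    have hzeta := hasSum_one_div_nat_pow_riemannZeta (s := 2 * (n + 1)) (by omega)
    rw [← hasSum_nat_add_iff' 1] at hzeta
    simpa [div_pow, div_eq_inv_mul, mul_pow] using hzeta.mul_right (z ^ (2 * (n + 1)))
  have hcols (k : ℕ) : HasSum (fun n : ℕ ↦ (z / ((k : ℂ) + 1)) ^ (2 * (n + 1)))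
      (z ^ 2 / (((k : ℂ) + 1) ^ 2 - z ^ 2)) := by
    refine hasSum_div_pow_two_mul_add_one ?_
    have hk : ‖(k : ℂ) + 1‖ = k + 1 := mod_cast Complex.norm_natCast (k + 1)
    linarith [k.cast_nonneg (α := ℝ)]
  have hcot := hasSum_sq_div_sq_sub_sq_cot (mem_integerComplement_of_norm_lt_one hz0 hz)
  have hswap := ((Equiv.prodComm ℕ ℕ).hasSum_iff.2 hsum).prod_fiberwise hcols
  rw [← hasSum_nat_add_iff' 1]
  convert! hsum.prod_fiberwise hrows using 1
  · simp
  · rw [hswap.unique hcot]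
    simp only [Finset.sum_range_one, Nat.cast_zero, mul_zero, pow_zero, mul_one, riemannZeta_zero]
    ring

lemma integral_sub_mul_pow (a : ℝ) (n : ℕ) :
    ∫ t in 0..a, (a - t) * t ^ n = a ^ (n + 2) / ((n + 1) * (n + 2)) := by
  have hexpand (t : ℝ) : (a - t) * t ^ n = a * t ^ n - t ^ (n + 1) := by ring
  simp_rw [hexpand]
  rw [intervalIntegral.integral_sub (Continuous.intervalIntegrable (by fun_prop) _ _)
      (Continuous.intervalIntegrable (by fun_prop) _ _),
    intervalIntegral.integral_const_mul, integral_pow, integral_pow]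
  push_cast
  field_simp
  ring

lemma hasSum_integral_sub_mul_of_hasSum_pow {ι : Type*} [Countable ι] {c : ι → ℂ}
    {e : ι → ℕ} {f : ℝ → ℂ} {a : ℝ} (ha : 0 < a)
    (hf : ∀ t ∈ Set.Ioc 0 a, HasSum (fun i ↦ c i * (t : ℂ) ^ e i) (f t)) :
    HasSum (fun i ↦ c i * (a ^ (e i + 2) / ((e i + 1) * (e i + 2))))
      (∫ t in 0..a, ((a - t : ℝ) : ℂ) * f t) := by
  have hsummable : Summable fun i ↦ ‖c i‖ * a ^ e i := by
    simpa [abs_of_pos ha] using (hf a ⟨ha, le_rfl⟩).summable.norm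
  have hterm (i : ι) : ∫ t in 0..a, ((a - t : ℝ) : ℂ) * (c i * (t : ℂ) ^ e i) =
      c i * (a ^ (e i + 2) / ((e i + 1) * (e i + 2))) := by
    have hreal := congrArg (fun r : ℝ ↦ c i * (r : ℂ)) (integral_sub_mul_pow a (e i))
    rw [← intervalIntegral.integral_ofReal, ← intervalIntegral.integral_const_mul] at hreal
    push_cast at hreal ⊢
    simpa only [mul_left_comm] using hreal
  simp_rw [← hterm]
  refine intervalIntegral.hasSum_integral_of_dominated_convergence
    (fun i _ ↦ a * (‖c i‖ * a ^ e i)) (fun i ↦ Continuous.aestronglyMeasurable (by fun_prop))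
    (fun i ↦ .of_forall fun t ht ↦ ?_) (.of_forall fun _ _ ↦ hsummable.mul_left a)
    intervalIntegrable_const
    (.of_forall fun t ht ↦ (hf t (by rwa [Set.uIoc_of_le ha.le] at ht)).mul_left _)
  rw [Set.uIoc_of_le ha.le] at ht
  have h0 : 0 ≤ t := ht.1.le
  rw [norm_mul, norm_mul, norm_pow, Complex.norm_of_nonneg (sub_nonneg.2 ht.2),
    Complex.norm_of_nonneg h0]
  gcongr
  · linarith
  · exact ht.2

/-- The modified Dirichlet kernel `1 + 2 ∑_{0 < j < m} cos (j x) + cos (m x)`, with its terms paired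
so that the value at `m = 0` is `0`. It is the product `sin (m x) cot (x / 2)`, continued
continuously to the poles of `cot (x / 2)`. -/
noncomputable def modifiedDirichletKernel (m : ℕ) (x : ℝ) : ℝ :=
  ∑ j ∈ Finset.range m, (cos (j * x) + cos ((j + 1 : ℕ) * x))

lemma continuous_modifiedDirichletKernel (m : ℕ) : Continuous (modifiedDirichletKernel m) := by
  unfold modifiedDirichletKernel
  fun_prop

lemma abs_modifiedDirichletKernel_le (m : ℕ) (x : ℝ) : |modifiedDirichletKernel m x| ≤ 2 * m := by
  have hterm (j : ℕ) : |cos (j * x) + cos ((j + 1 : ℕ) * x)| ≤ 2 :=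
    (abs_add_le _ _).trans <| by
      linarith [abs_cos_le_one (j * x), abs_cos_le_one ((j + 1 : ℕ) * x)]
  calc |modifiedDirichletKernel m x|
      ≤ ∑ j ∈ Finset.range m, |cos (j * x) + cos ((j + 1 : ℕ) * x)| := Finset.abs_sum_le_sum_abs _ _
    _ ≤ ∑ _j ∈ Finset.range m, (2 : ℝ) := Finset.sum_le_sum fun j _ ↦ hterm j
    _ = 2 * m := by rw [Finset.sum_const, Finset.card_range, nsmul_eq_mul, mul_comm]

lemma sin_mul_cot_eq_modifiedDirichletKernel (m : ℕ) {x : ℝ} (hx : sin x ≠ 0) :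
    sin (m * (2 * x)) * cot x = modifiedDirichletKernel m (2 * x) := by
  induction m with
  | zero => simp [modifiedDirichletKernel]
  | succ m ih =>
    have hlow : (m : ℝ) * (2 * x) = (2 * m + 1) * x - x := by ring
    have hhigh : ((m + 1 : ℕ) : ℝ) * (2 * x) = (2 * m + 1) * x + x := by push_cast; ring
    rw [modifiedDirichletKernel, Finset.sum_range_succ, ← modifiedDirichletKernel, ← ih,
      cot_eq_cos_div_sin, hlow, hhigh, sin_add, sin_sub, cos_add, cos_sub]
    field_simp
    ring

lemma integral_cos_nat_mul (j : ℕ) : ∫ x in 0..π, cos (j * x) = if j = 0 then π else 0 := by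
  split_ifs with hj
  · simp [hj]
  · rw [intervalIntegral.integral_comp_mul_left _ (by exact_mod_cast hj), integral_cos]
    simp

lemma integral_modifiedDirichletKernel {m : ℕ} (hm : m ≠ 0) :
    ∫ x in 0..π, modifiedDirichletKernel m x = π := by
  have hint (j : ℕ) : IntervalIntegrable (fun x ↦ cos (j * x)) MeasureTheory.volume 0 π :=
    Continuous.intervalIntegrable (by fun_prop) _ _
  unfold modifiedDirichletKernel
  rw [intervalIntegral.integral_finsetSum fun j _ ↦ (hint j).add (hint (j + 1))]
  simp_rw [intervalIntegral.integral_add (hint _) (hint _), integral_cos_nat_mul]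
  simp [hm]

lemma hasSum_integral_mul_cot {ι : Type*} [Countable ι] {a : ι → ℝ} {m : ι → ℕ} {f : ℝ → ℝ}
    (hm : ∀ i, m i ≠ 0) (ha : Summable fun i ↦ |a i| * m i)
    (hf : ∀ t ∈ Set.Ioc (0 : ℝ) (1 / 2), HasSum (fun i ↦ a i * sin (2 * π * m i * t)) (f t)) :
    HasSum (fun i ↦ a i / 2) (∫ t in 0..1 / 2, f t * cot (π * t)) := by
  have hterm (i : ι) :
      ∫ t in 0..1 / 2, a i * modifiedDirichletKernel (m i) (2 * π * t) = a i / 2 := by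
    rw [intervalIntegral.integral_const_mul,
      intervalIntegral.integral_comp_mul_left _ (by positivity : 2 * π ≠ 0), mul_zero,
      show 2 * π * (1 / 2) = π by ring, integral_modifiedDirichletKernel (hm i), smul_eq_mul]
    field_simp
  simp_rw [← hterm]
  refine intervalIntegral.hasSum_integral_of_dominated_convergence
    (fun i _ ↦ 2 * (|a i| * m i)) (fun i ↦ ?_) (fun i ↦ .of_forall fun t _ ↦ ?_)
    (.of_forall fun _ _ ↦ ha.mul_left 2) intervalIntegrable_const (.of_forall fun t ht ↦ ?_)
  · have hcont := continuous_modifiedDirichletKernel (m i)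
    exact Continuous.aestronglyMeasurable (by fun_prop)
  · rw [norm_eq_abs, abs_mul, mul_left_comm]
    gcongr
    exact abs_modifiedDirichletKernel_le _ _
  · rw [Set.uIoc_of_le (by norm_num)] at ht
    have hsin : sin (π * t) ≠ 0 :=
      (sin_pos_of_pos_of_lt_pi (mul_pos pi_pos ht.1) (by nlinarith [pi_pos, ht.2])).ne'
    convert! (hf t ht).mul_right (cot (π * t)) using 2 with i
    rw [mul_assoc 2 π t, ← sin_mul_cot_eq_modifiedDirichletKernel _ hsin]
    ring_nf

lemma bernoulliFun_three (x : ℝ) : bernoulliFun 3 x = x * (x - 1 / 2) * (x - 1) := by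
  simp [bernoulliFun, Polynomial.bernoulli_def, Finset.sum_range_succ, Nat.choose,
    bernoulli_eq_bernoulli'_of_ne_one]
  ring

lemma hasSum_sin_div_cube {x : ℝ} (hx : x ∈ Set.Icc (0 : ℝ) 1) :
    HasSum (fun n : ℕ ↦ 1 / (n : ℝ) ^ 3 * sin (2 * π * n * x))
      (2 * π ^ 3 / 3 * (x * (x - 1 / 2) * (x - 1))) := by
  convert! hasSum_one_div_nat_pow_mul_sin one_ne_zero hx using 1
  rw [← bernoulliFun, show 2 * 1 + 1 = 3 from rfl, bernoulliFun_three]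
  push_cast [Nat.factorial]
  ring

lemma hasSum_sin_odd_div_cube {t : ℝ} (ht : t ∈ Set.Icc (0 : ℝ) (1 / 2)) :
    HasSum (fun k : ℕ ↦ 1 / ((2 * k + 1 : ℕ) : ℝ) ^ 3 * sin (2 * π * (2 * k + 1 : ℕ) * t))
      (π ^ 3 / 2 * (t * (1 / 2 - t))) := by
  have hall := hasSum_sin_div_cube (x := t) ⟨ht.1, by linarith [ht.2]⟩
  have htwice := hasSum_sin_div_cube (x := 2 * t) ⟨by linarith [ht.1], by linarith [ht.2]⟩
  have heven : HasSum (fun k : ℕ ↦ 1 / ((2 * k : ℕ) : ℝ) ^ 3 * sin (2 * π * (2 * k : ℕ) * t))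
      (1 / 8 * (2 * π ^ 3 / 3 * (2 * t * (2 * t - 1 / 2) * (2 * t - 1)))) := by
    convert! htwice.mul_left (1 / 8) using 2 with k
    push_cast
    ring_nf
  convert! hasSum_odd_of_hasSum_even hall heven using 1
  ring

lemma summable_abs_one_div_odd_cube_mul :
    Summable fun k : ℕ ↦ |1 / ((2 * k + 1 : ℕ) : ℝ) ^ 3| * ((2 * k + 1 : ℕ) : ℝ) := by
  have hsq : Summable fun k : ℕ ↦ 1 / ((2 * k + 1 : ℕ) : ℝ) ^ 2 :=
    (summable_one_div_nat_pow.2 one_lt_two).comp_injective fun _ _ h ↦ by simpa using h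
  refine hsq.congr fun k ↦ ?_
  rw [abs_of_nonneg (by positivity)]
  field_simp

lemma integral_mul_half_sub_mul_cot :
    ((∫ t in 0..1 / 2, t * (1 / 2 - t) * cot (π * t) : ℝ) : ℂ) =
      7 / (8 * π ^ 3) * riemannZeta 3 := by
  have hfourier := hasSum_integral_mul_cot (fun k ↦ (2 * k).succ_ne_zero)
    summable_abs_one_div_odd_cube_mul
    (fun t ht ↦ hasSum_sin_odd_div_cube (Set.Ioc_subset_Icc_self ht))
  simp_rw [mul_assoc (π ^ 3 / 2)] at hfourier
  rw [intervalIntegral.integral_const_mul, ← Complex.hasSum_ofReal] at hfourier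
  have hzeta := (hasSum_one_div_odd_pow_riemannZeta (s := 3) (by norm_num)).div_const 2
  push_cast at hfourier hzeta
  rw [div_mul_eq_mul_div, eq_div_iff (by simp)]
  linear_combination 16 * hfourier.unique hzeta

lemma hasSum_riemannZeta_two_mul_div :
    HasSum (fun n : ℕ ↦ riemannZeta (2 * n) / ((2 * n + 1) * (n + 1) * 4 ^ n))
      (-4 * π * (∫ t in 0..1 / 2, t * (1 / 2 - t) * cot (π * t) : ℝ)) := by
  have hgen {t : ℝ} (ht : t ∈ Set.Ioc (0 : ℝ) (1 / 2)) :
      HasSum (fun n : ℕ ↦ riemannZeta (2 * n) * (t : ℂ) ^ (2 * n))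
        (-(π * t * Complex.cot (π * t)) / 2) :=
    hasSum_riemannZeta_two_mul_mul_pow (Complex.ofReal_ne_zero.2 ht.1.ne')
      (by rw [Complex.norm_of_nonneg ht.1.le]; linarith [ht.2])
  have hintegral :
      ∫ t in 0..1 / 2, ((1 / 2 - t : ℝ) : ℂ) * (-(π * t * Complex.cot (π * t)) / 2) =
        -π / 2 * (∫ t in 0..1 / 2, t * (1 / 2 - t) * cot (π * t) : ℝ) := by
    rw [← intervalIntegral.integral_ofReal, ← intervalIntegral.integral_const_mul]
    congr 1 with t
    push_cast
    ring
  have hsum := (hasSum_integral_sub_mul_of_hasSum_pow one_half_pos fun _ ↦ hgen).mul_left 8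
  rw [hintegral] at hsum
  convert! hsum using 1
  · ext n
    have hpow : (1 / 2 : ℂ) ^ (2 * n + 2) = 1 / (4 * 4 ^ n) := by
      rw [pow_add, pow_mul, one_div_pow, one_div_pow]
      norm_num [mul_comm]
    have h1 : (2 * n + 1 : ℂ) ≠ 0 := by exact_mod_cast (2 * n).succ_ne_zero
    have h2 : (n + 1 : ℂ) ≠ 0 := n.cast_add_one_ne_zero
    push_cast
    rw [hpow]
    field_simp
    ring
  · ring

theorem stmt13 :
    ∑' n : ℕ, riemannZeta (2 * n) / ((2 * n + 1) * (n + 1) * 4 ^ n) =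
      -7 * riemannZeta 3 / (2 * (π : ℂ) ^ 2) := by
  rw [hasSum_riemannZeta_two_mul_div.tsum_eq, integral_mul_half_sub_mul_cot]
  have hpi : (π : ℂ) ≠ 0 := Complex.ofReal_ne_zero.2 pi_ne_zero
  field_simp
  ring
end
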